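/- Let n ≥ 1 and let Ω ⊊ ℝⁿ be a nonempty open set with d(x) := dist(x, ℝⁿ∖Ω) and finite inner radius R := sup_{x ∈ Ω} d(x) < ∞. Then for every s ≥ n, every γ > 1, and every u ∈ C_c^∞(Ω), one has ∫_Ω |∇u| / d^{s−1} dx ≥ (s−n) · ∫_Ω |u| / d^s dx + ((γ−1)/R^{s−n}) · ∫_Ω (|u| / dⁿ) · X^γ(d/R) dx. -/

import Mathlib

open MeasureTheory Metric Set

/-!
For finitely many points of `Ωᶜ`, each Voronoi cell is star-shaped about its centre `y`, where `u`
vanishes. In polar coordinates around `y`, the fundamental theorem of calculus along rays and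
Tonelli's theorem bound the integral of `|u| w(|x - y|)` over the cell by that of
`|∇u| v(|x - y|)`, as soon as the tail integral of `r ^ (n - 1) w(r)` over `r > ρ` is at most
`ρ ^ (n - 1) v(ρ)`. Fatou's lemma passes from finite sets to a dense sequence in `Ωᶜ`. With
`v(ρ) = ρ ^ (1 - s)` and `w` the logarithmic weight cut off at `R`, the tail is exactly
`ρ ^ (n - s) - R ^ (n - s) X(ρ / R) ^ (γ - 1)`. Fatou's lemma needs a lower semicontinuous weight,
hence one cut off to the open interval `(0, R)`; points with `d = R` are recovered by letting the
cut-off radius decrease to `R`.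
-/

open Filter Module Topology
open scoped ENNReal

section Tonelli

theorem lintegral_mul_le_lintegral_mul_setLIntegral_Ioi {α : Type*} [LinearOrder α]
    [TopologicalSpace α] [OrderClosedTopology α] [SecondCountableTopology α] [MeasurableSpace α]
    [OpensMeasurableSpace α] {ν : Measure α} [SFinite ν] {f g W : α → ℝ≥0∞}
    (hg : Measurable g) (hW : Measurable W) (hfg : ∀ᵐ r ∂ν, f r ≤ ∫⁻ ρ in Iio r, g ρ ∂ν) :
    ∫⁻ r, f r * W r ∂ν ≤ ∫⁻ ρ, g ρ * ∫⁻ r in Ioi ρ, W r ∂ν ∂ν := by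
  have hlt : MeasurableSet {p : α × α | p.2 < p.1} := measurableSet_lt measurable_snd measurable_fst
  calc ∫⁻ r, f r * W r ∂ν
      ≤ ∫⁻ r, (∫⁻ ρ in Iio r, g ρ ∂ν) * W r ∂ν := by
        apply lintegral_mono_ae
        filter_upwards [hfg] with r hr
        gcongr
    _ = ∫⁻ r, ∫⁻ ρ, {p : α × α | p.2 < p.1}.indicator (fun p ↦ g p.2 * W p.1) (r, ρ) ∂ν ∂ν := by
        refine lintegral_congr fun r ↦ ?_
        rw [← lintegral_mul_const _ hg, ← lintegral_indicator measurableSet_Iio]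
        rfl
    _ = ∫⁻ ρ, ∫⁻ r, {p : α × α | p.2 < p.1}.indicator (fun p ↦ g p.2 * W p.1) (r, ρ) ∂ν ∂ν :=
        lintegral_lintegral_swap ((Measurable.indicator (by fun_prop) hlt).aemeasurable)
    _ = ∫⁻ ρ, g ρ * ∫⁻ r in Ioi ρ, W r ∂ν ∂ν := by
        refine lintegral_congr fun ρ ↦ ?_
        rw [← lintegral_const_mul _ hW, ← lintegral_indicator measurableSet_Ioi]
        rfl

end Tonelli

/-- The condition on radial weights in dimension `n` under which the Hardy inequality
`∫ |u| w(d) ≤ ∫ |∇u| v(d)` reduces to one dimension. The factor `r ^ (n - 1)` is the density of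
polar coordinates; `n - 1` is truncated subtraction, so `n` should be positive. -/
def IsHardyPair (n : ℕ) (w v : ℝ → ℝ≥0∞) : Prop :=
  ∀ ρ > 0, ∫⁻ r in Ioi ρ, ENNReal.ofReal (r ^ (n - 1)) * w r ≤ ENNReal.ofReal (ρ ^ (n - 1)) * v ρ

section Ray

variable {E F : Type*} [NormedAddCommGroup E] [NormedSpace ℝ E] [NormedAddCommGroup F]
  [NormedSpace ℝ F]

theorem enorm_le_setLIntegral_enorm_fderiv_ray {u : E → F} (hu : ContDiff ℝ 1 u) {y ω : E}
    (huy : u y = 0) (hω : ‖ω‖ = 1) {r : ℝ} (hr : 0 ≤ r) :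
    ‖u (y + r • ω)‖ₑ ≤ ∫⁻ ρ in Ioo 0 r, ‖fderiv ℝ u (y + ρ • ω)‖ₑ := by
  have hderiv (ρ : ℝ) : deriv (fun t : ℝ ↦ u (y + t • ω)) ρ = fderiv ℝ u (y + ρ • ω) ω := by
    have hray : HasDerivAt (fun t : ℝ ↦ y + t • ω) ω ρ := by
      simpa using ((hasDerivAt_id ρ).smul_const ω).const_add y
    exact ((hu.differentiable one_ne_zero _).hasFDerivAt.comp_hasDerivAt ρ hray).deriv
  calc ‖u (y + r • ω)‖ₑ
      = ‖u (y + r • ω) - u (y + (0 : ℝ) • ω)‖ₑ := by simp [huy]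
    _ ≤ ∫⁻ ρ in Icc 0 r, ‖deriv (fun t : ℝ ↦ u (y + t • ω)) ρ‖ₑ :=
        enorm_sub_le_lintegral_deriv_of_contDiffOn_Icc (f := fun t : ℝ ↦ u (y + t • ω))
          (by fun_prop) hr
    _ = ∫⁻ ρ in Ioo 0 r, ‖fderiv ℝ u (y + ρ • ω) ω‖ₑ := by
        rw [restrict_Ioo_eq_restrict_Icc]
        simp only [hderiv]
    _ ≤ ∫⁻ ρ in Ioo 0 r, ‖fderiv ℝ u (y + ρ • ω)‖ₑ := by
        refine lintegral_mono fun ρ ↦ ?_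
        have hω' : ‖ω‖ₑ = 1 := by rw [← ofReal_norm, hω, ENNReal.ofReal_one]
        simpa only [hω', mul_one] using (fderiv ℝ u (y + ρ • ω)).le_opENorm ω

theorem add_smul_mem_of_starConvex {V : Set E} {y ω : E} (hV : StarConvex ℝ y V) {ρ r : ℝ}
    (hρ : 0 < ρ) (hρr : ρ ≤ r) (hr : y + r • ω ∈ V) : y + ρ • ω ∈ V := by
  have hr0 : 0 < r := hρ.trans_le hρr
  have hmem := hV.add_smul_sub_mem hr (div_nonneg hρ.le hr0.le) (div_le_one_of_le₀ hρr hr0.le)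
  rwa [add_sub_cancel_left, smul_smul, div_mul_cancel₀ _ hr0.ne'] at hmem

theorem indicator_enorm_le_setLIntegral_ray {u : E → F} (hu : ContDiff ℝ 1 u) {V : Set E}
    {y ω : E} (hV : StarConvex ℝ y V) (huy : u y = 0) (hω : ‖ω‖ = 1) {r : ℝ} (hr : 0 ≤ r) :
    V.indicator (fun x ↦ ‖u x‖ₑ) (y + r • ω) ≤
      ∫⁻ ρ in Ioo 0 r, V.indicator (fun x ↦ ‖fderiv ℝ u x‖ₑ) (y + ρ • ω) := by
  by_cases hmem : y + r • ω ∈ V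
  · rw [indicator_of_mem hmem]
    refine (enorm_le_setLIntegral_enorm_fderiv_ray hu huy hω hr).trans_eq ?_
    refine setLIntegral_congr_fun measurableSet_Ioo fun ρ hρ ↦ ?_
    exact (indicator_of_mem (add_smul_mem_of_starConvex hV hρ.1 hρ.2.le hmem)
      fun x ↦ ‖fderiv ℝ u x‖ₑ).symm
  · rw [indicator_of_notMem hmem]
    exact zero_le

theorem lintegral_ray_mul_le [MeasurableSpace E] [BorelSpace E] {n : ℕ} {w v : ℝ → ℝ≥0∞}
    (hwv : IsHardyPair n w v) (hw : Measurable w) {u : E → F} (hu : ContDiff ℝ 1 u)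
    {V : Set E} (hVm : MeasurableSet V) {y ω : E} (hV : StarConvex ℝ y V) (huy : u y = 0)
    (hω : ‖ω‖ = 1) :
    ∫⁻ r in Ioi (0 : ℝ), ENNReal.ofReal (r ^ (n - 1)) *
        (V.indicator (fun x ↦ ‖u x‖ₑ) (y + r • ω) * w r) ≤
      ∫⁻ ρ in Ioi (0 : ℝ), ENNReal.ofReal (ρ ^ (n - 1)) *
        (V.indicator (fun x ↦ ‖fderiv ℝ u x‖ₑ) (y + ρ • ω) * v ρ) := by
  set f : ℝ → ℝ≥0∞ := fun r ↦ V.indicator (fun x ↦ ‖u x‖ₑ) (y + r • ω)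
  set g : ℝ → ℝ≥0∞ := fun ρ ↦ V.indicator (fun x ↦ ‖fderiv ℝ u x‖ₑ) (y + ρ • ω)
  have hg : Measurable g :=
    ((hu.continuous_fderiv one_ne_zero).enorm.measurable.indicator hVm).comp (by fun_prop)
  have hfg : ∀ᵐ r ∂volume.restrict (Ioi (0 : ℝ)),
      f r ≤ ∫⁻ ρ in Iio r, g ρ ∂volume.restrict (Ioi (0 : ℝ)) := by
    filter_upwards [ae_restrict_mem measurableSet_Ioi] with r hr
    rw [Measure.restrict_restrict measurableSet_Iio, Iio_inter_Ioi]
    exact indicator_enorm_le_setLIntegral_ray hu hV huy hω (le_of_lt hr)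
  calc ∫⁻ r in Ioi (0 : ℝ), ENNReal.ofReal (r ^ (n - 1)) * (f r * w r)
      = ∫⁻ r in Ioi (0 : ℝ), f r * (ENNReal.ofReal (r ^ (n - 1)) * w r) := by
        simp only [mul_left_comm]
    _ ≤ ∫⁻ ρ in Ioi (0 : ℝ), g ρ * ∫⁻ r in Ioi ρ, ENNReal.ofReal (r ^ (n - 1)) * w r
          ∂volume.restrict (Ioi (0 : ℝ)) :=
        lintegral_mul_le_lintegral_mul_setLIntegral_Ioi hg (by fun_prop) hfg
    _ ≤ ∫⁻ ρ in Ioi (0 : ℝ), g ρ * (ENNReal.ofReal (ρ ^ (n - 1)) * v ρ) := by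
        refine setLIntegral_mono' measurableSet_Ioi fun ρ hρ ↦ ?_
        gcongr
        exact (lintegral_mono' (Measure.restrict_mono_measure Measure.restrict_le_self _)
          le_rfl).trans (hwv ρ hρ)
    _ = ∫⁻ ρ in Ioi (0 : ℝ), ENNReal.ofReal (ρ ^ (n - 1)) * (g ρ * v ρ) := by
        simp only [mul_left_comm]

end Ray

section Polar

variable {E : Type*} [NormedAddCommGroup E] [NormedSpace ℝ E] [FiniteDimensional ℝ E]
  [Nontrivial E] [MeasurableSpace E] [BorelSpace E] (μ : Measure E) [μ.IsAddHaarMeasure]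

theorem lintegral_eq_lintegral_toSphere_setLIntegral_Ioi {f : E → ℝ≥0∞} (hf : Measurable f)
    (y : E) :
    ∫⁻ x, f x ∂μ = ∫⁻ ω : sphere (0 : E) 1, ∫⁻ r in Ioi (0 : ℝ),
      ENNReal.ofReal (r ^ (finrank ℝ E - 1)) * f (y + r • (ω : E)) ∂volume ∂μ.toSphere := by
  calc ∫⁻ x, f x ∂μ
      = ∫⁻ x in {0}ᶜ, f (y + x) ∂μ := by rw [restrict_compl_singleton, lintegral_add_left_eq_self]
    _ = ∫⁻ x : ({0}ᶜ : Set E), f (y + x) ∂μ.comap (↑) :=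
        (lintegral_subtype_comap (measurableSet_singleton 0).compl fun x ↦ f (y + x)).symm
    _ = ∫⁻ p : sphere (0 : E) 1 × Ioi (0 : ℝ), f (y + (p.2 : ℝ) • (p.1 : E))
          ∂μ.toSphere.prod (.volumeIoiPow (finrank ℝ E - 1)) := by
        rw [← (μ.measurePreserving_homeomorphUnitSphereProd).lintegral_comp_emb
          (Homeomorph.measurableEmbedding _)]
        refine lintegral_congr fun x ↦ ?_
        have hx : ‖(x : E)‖ ≠ 0 := norm_ne_zero_iff.2 x.2
        simp [smul_smul, mul_inv_cancel₀ hx]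
    _ = ∫⁻ ω : sphere (0 : E) 1, ∫⁻ r : Ioi (0 : ℝ), f (y + (r : ℝ) • (ω : E))
          ∂.volumeIoiPow (finrank ℝ E - 1) ∂μ.toSphere :=
        lintegral_prod _ (by fun_prop)
    _ = _ := by
        refine lintegral_congr fun ω ↦ ?_
        rw [Measure.volumeIoiPow, lintegral_withDensity_eq_lintegral_mul _ (by fun_prop)
          (by fun_prop), ← lintegral_subtype_comap measurableSet_Ioi]
        rfl

end Polar

section Voronoi

/-- The Voronoi cell of the centre `y i`: the points to which `y i` is nearest. A point equidistant
from several nearest centres goes to the least index, so that the cells are disjoint. -/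
def voronoiCell {X ι : Type*} [PseudoMetricSpace X] [Preorder ι] (y : ι → X) (i : ι) : Set X :=
  {x | (∀ j, dist x (y i) ≤ dist x (y j)) ∧ ∀ j < i, dist x (y i) < dist x (y j)}

variable {X ι : Type*} [PseudoMetricSpace X]

theorem measurableSet_voronoiCell [MeasurableSpace X] [OpensMeasurableSpace X] [Preorder ι]
    [Countable ι] (y : ι → X) (i : ι) : MeasurableSet (voronoiCell y i) := by
  have hdist (j : ι) : Measurable fun x ↦ dist x (y j) :=
    (continuous_id.dist continuous_const).measurable
  simp only [voronoiCell, Set.ofPred_and, Set.ofPred_forall]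
  exact (MeasurableSet.iInter fun j ↦ measurableSet_le (hdist i) (hdist j)).inter
    (.iInter fun j ↦ .iInter fun _ ↦ measurableSet_lt (hdist i) (hdist j))

theorem pairwise_disjoint_voronoiCell [LinearOrder ι] (y : ι → X) :
    Pairwise (Function.onFun Disjoint (voronoiCell y)) := by
  refine (pairwise_disjoint_on _).2 fun i j hij ↦ disjoint_left.2 fun x hi hj ↦ ?_
  exact (hi.1 j).not_gt (hj.2 i hij)

theorem iUnion_voronoiCell [LinearOrder ι] [Finite ι] [Nonempty ι] (y : ι → X) :
    ⋃ i, voronoiCell y i = univ := by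
  refine eq_univ_of_forall fun x ↦ mem_iUnion.2 ?_
  obtain ⟨i, hi, hfirst⟩ := exists_minimal_of_wellFoundedLT
    (fun i ↦ ∀ j, dist x (y i) ≤ dist x (y j)) (Finite.exists_min fun i ↦ dist x (y i))
  refine ⟨i, hi, fun j hj ↦ lt_of_not_ge fun hji ↦ ?_⟩
  exact hj.not_ge (hfirst (fun k ↦ hji.trans (hi k)) hj.le)

theorem infDist_range_of_mem_voronoiCell [Preorder ι] {y : ι → X} {i : ι} {x : X}
    (hx : x ∈ voronoiCell y i) : infDist x (range y) = dist x (y i) :=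
  (infDist_le_dist_of_mem (mem_range_self i)).antisymm
    ((le_infDist ⟨y i, mem_range_self i⟩).2 (forall_mem_range.2 hx.1))

theorem dist_lineMap_sub_dist_le {E : Type*} [SeminormedAddCommGroup E] [NormedSpace ℝ E]
    (x y z : E) {c : ℝ} (hc : c ∈ Icc (0 : ℝ) 1) :
    dist (AffineMap.lineMap y x c) y - dist (AffineMap.lineMap y x c) z ≤ dist x y - dist x z := by
  have hy : dist (AffineMap.lineMap y x c) y = c * dist x y := by
    rw [dist_lineMap_left, Real.norm_of_nonneg hc.1, dist_comm]
  have hx : dist x (AffineMap.lineMap y x c) = (1 - c) * dist x y := by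
    rw [dist_right_lineMap, Real.norm_of_nonneg (sub_nonneg.2 hc.2), dist_comm y x]
  linarith [dist_triangle x (AffineMap.lineMap y x c) z]

theorem starConvex_voronoiCell {E : Type*} [SeminormedAddCommGroup E] [NormedSpace ℝ E] [Preorder ι]
    (y : ι → E) (i : ι) : StarConvex ℝ (y i) (voronoiCell y i) := by
  refine starConvex_iff_segment_subset.2 fun x hx ↦ ?_
  rw [segment_eq_image_lineMap]
  rintro _ ⟨c, hc, rfl⟩
  have key (j : ι) := dist_lineMap_sub_dist_le x (y i) (y j) hc
  exact ⟨fun j ↦ by linarith [key j, hx.1 j], fun j hj ↦ by linarith [key j, hx.2 j hj]⟩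

end Voronoi

theorem tendsto_infDist_range_fin {X : Type*} [PseudoMetricSpace X] (y : ℕ → X) (x : X) :
    Tendsto (fun k : ℕ ↦ infDist x (range fun i : Fin (k + 1) ↦ y i)) atTop
      (𝓝 (infDist x (range y))) := by
  refine tendsto_order.2 ⟨fun a ha ↦ .of_forall fun k ↦ ha.trans_le ?_, fun a ha ↦ ?_⟩
  · exact infDist_le_infDist_of_subset (range_comp_subset_range _ y) (range_nonempty _)
  · obtain ⟨_, ⟨N, rfl⟩, hN⟩ := (infDist_lt_iff (range_nonempty y)).1 ha
    filter_upwards [eventually_ge_atTop N] with k hk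
    have hmem : y N ∈ range fun i : Fin (k + 1) ↦ y i := ⟨⟨N, Nat.lt_succ_of_le hk⟩, rfl⟩
    exact (infDist_le_dist_of_mem hmem).trans_lt hN

theorem lintegral_le_of_le_liminf {α : Type*} [MeasurableSpace α] {μ : Measure α}
    {f : α → ℝ≥0∞} {F : ℕ → α → ℝ≥0∞} {B : ℝ≥0∞} (hF : ∀ k, Measurable (F k))
    (hf : ∀ x, f x ≤ liminf (fun k ↦ F k x) atTop) (hB : ∀ k, ∫⁻ x, F k x ∂μ ≤ B) :
    ∫⁻ x, f x ∂μ ≤ B :=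
  calc ∫⁻ x, f x ∂μ
      ≤ ∫⁻ x, liminf (fun k ↦ F k x) atTop ∂μ := lintegral_mono hf
    _ ≤ liminf (fun k ↦ ∫⁻ x, F k x ∂μ) atTop := lintegral_liminf_le hF
    _ ≤ B := liminf_le_of_frequently_le' (.of_forall hB)

section Hardy

variable {E F : Type*} [NormedAddCommGroup E] [NormedSpace ℝ E] [FiniteDimensional ℝ E]
  [Nontrivial E] [MeasurableSpace E] [BorelSpace E] {μ : Measure E} [μ.IsAddHaarMeasure]
  [NormedAddCommGroup F] [NormedSpace ℝ F] {w v : ℝ → ℝ≥0∞} {u : E → F}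

theorem setLIntegral_mul_dist_le_of_starConvex (hwv : IsHardyPair (finrank ℝ E) w v)
    (hw : Measurable w) (hv : Measurable v) (hu : ContDiff ℝ 1 u) {V : Set E}
    (hVm : MeasurableSet V) {y : E} (hV : StarConvex ℝ y V) (huy : u y = 0) :
    ∫⁻ x in V, ‖u x‖ₑ * w (dist x y) ∂μ ≤ ∫⁻ x in V, ‖fderiv ℝ u x‖ₑ * v (dist x y) ∂μ := by
  have polar {φ : E → ℝ≥0∞} {k : ℝ → ℝ≥0∞} (hφ : Measurable φ) (hk : Measurable k) :
      ∫⁻ x in V, φ x * k (dist x y) ∂μ = ∫⁻ ω : sphere (0 : E) 1, ∫⁻ r in Ioi (0 : ℝ),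
        ENNReal.ofReal (r ^ (finrank ℝ E - 1)) * (V.indicator φ (y + r • (ω : E)) * k r)
          ∂volume ∂μ.toSphere := by
    have hφk : Measurable fun x ↦ V.indicator φ x * k (dist x y) := by
      have := hφ.indicator hVm
      fun_prop
    simp only [← lintegral_indicator hVm, indicator_mul_left]
    rw [lintegral_eq_lintegral_toSphere_setLIntegral_Ioi μ hφk y]
    refine lintegral_congr fun ω ↦ setLIntegral_congr_fun measurableSet_Ioi fun r hr ↦ ?_
    have hdist : dist (y + r • (ω : E)) y = r := by
      simp [norm_smul, abs_of_pos (mem_Ioi.1 hr)]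
    simp only [hdist]
  have hcd := (hu.continuous_fderiv one_ne_zero).enorm.measurable
  rw [polar hu.continuous.enorm.measurable hw, polar hcd hv]
  exact lintegral_mono fun ω ↦
    lintegral_ray_mul_le hwv hw hu hVm hV huy (norm_eq_of_mem_sphere ω)

theorem lintegral_mul_infDist_range_le_of_finite {ι : Type*} [LinearOrder ι] [Finite ι]
    [Nonempty ι] (hwv : IsHardyPair (finrank ℝ E) w v) (hw : Measurable w) (hv : Measurable v)
    (hu : ContDiff ℝ 1 u) {y : ι → E} (huy : ∀ i, u (y i) = 0) :
    ∫⁻ x, ‖u x‖ₑ * w (infDist x (range y)) ∂μ ≤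
      ∫⁻ x, ‖fderiv ℝ u x‖ₑ * v (infDist x (range y)) ∂μ := by
  have split (f : E → ℝ≥0∞) (k : ℝ → ℝ≥0∞) : ∫⁻ x, f x * k (infDist x (range y)) ∂μ =
      ∑' i, ∫⁻ x in voronoiCell y i, f x * k (dist x (y i)) ∂μ := by
    rw [← setLIntegral_univ, ← iUnion_voronoiCell y, lintegral_iUnion
      (measurableSet_voronoiCell y) (pairwise_disjoint_voronoiCell y)]
    refine tsum_congr fun i ↦ setLIntegral_congr_fun (measurableSet_voronoiCell y i) fun x hx ↦ ?_
    simp only [infDist_range_of_mem_voronoiCell hx]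
  rw [split, split]
  exact ENNReal.tsum_le_tsum fun i ↦ setLIntegral_mul_dist_le_of_starConvex hwv hw hv hu
    (measurableSet_voronoiCell y i) (starConvex_voronoiCell y i) (huy i)

theorem lintegral_mul_infDist_range_le (hwv : IsHardyPair (finrank ℝ E) w v)
    (hw : LowerSemicontinuous w) (hv : Antitone v) (hu : ContDiff ℝ 1 u) {y : ℕ → E}
    (huy : ∀ i, u (y i) = 0) :
    ∫⁻ x, ‖u x‖ₑ * w (infDist x (range y)) ∂μ ≤
      ∫⁻ x, ‖fderiv ℝ u x‖ₑ * v (infDist x (range y)) ∂μ := by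
  refine lintegral_le_of_le_liminf
    (F := fun k x ↦ ‖u x‖ₑ * w (infDist x (range fun i : Fin (k + 1) ↦ y i)))
    (fun k ↦ ?_) (fun x ↦ ?_) fun k ↦ ?_
  · exact hu.continuous.enorm.measurable.mul (hw.measurable.comp measurable_infDist)
  · rw [ENNReal.liminf_const_mul_of_ne_top enorm_ne_top]
    gcongr
    exact (LowerSemicontinuousAt.le_liminf (hw _)).trans
      (tendsto_infDist_range_fin y x).liminf_le_liminf_comp
  · refine (lintegral_mul_infDist_range_le_of_finite hwv hw.measurable hv.measurable hu
      fun i : Fin (k + 1) ↦ huy i).trans (lintegral_mono fun x ↦ ?_)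
    have hle : infDist x (range y) ≤ infDist x (range fun i : Fin (k + 1) ↦ y i) :=
      infDist_le_infDist_of_subset (range_comp_subset_range _ y) (range_nonempty _)
    gcongr
    exact hv hle

theorem lintegral_mul_infDist_le (hwv : IsHardyPair (finrank ℝ E) w v)
    (hw : LowerSemicontinuous w) (hv : Antitone v) (hu : ContDiff ℝ 1 u) {C : Set E}
    (hC : C.Nonempty) (huC : ∀ x ∈ C, u x = 0) :
    ∫⁻ x, ‖u x‖ₑ * w (infDist x C) ∂μ ≤ ∫⁻ x, ‖fderiv ℝ u x‖ₑ * v (infDist x C) ∂μ := by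
  obtain ⟨t, htC, htc, hCt⟩ :=
    (TopologicalSpace.IsSeparable.of_separableSpace C).exists_countable_dense_subset
  obtain ⟨y, rfl⟩ := htc.exists_eq_range (closure_nonempty_iff.1 (hC.mono hCt))
  have hinf (x : E) : infDist x C = infDist x (range y) := by
    rw [← infDist_closure (s := C), ← infDist_closure (s := range y),
      (closure_mono htC).antisymm (closure_minimal hCt isClosed_closure)]
  simp only [hinf]
  exact lintegral_mul_infDist_range_le hwv hw hv hu fun i ↦ huC _ (htC (mem_range_self i))

end Hardy

section Weight

/-- The weight in front of `|u|` as a function of the distance `r` to the complement; the power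
`γ` is taken of `X (r / R) = (1 - log (r / R))⁻¹`. -/
noncomputable def logHardyWeight (n s γ R r : ℝ) : ℝ :=
  (s - n) / r ^ s + (γ - 1) / R ^ (s - n) * (((1 - Real.log (r / R))⁻¹) ^ γ / r ^ n)

/-- The integral of `r ^ (n - 1) * logHardyWeight n s γ R r` over `ρ < r < R`. -/
noncomputable def logHardyTail (n s γ R ρ : ℝ) : ℝ :=
  ρ ^ (n - s) - R ^ (n - s) * (1 - Real.log (ρ / R)) ^ (1 - γ)

variable {n s γ R r : ℝ}

theorem one_le_one_sub_log_div (hr : 0 < r) (hrR : r ≤ R) : 1 ≤ 1 - Real.log (r / R) := by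
  have hR : 0 < R := hr.trans_le hrR
  linarith [Real.log_nonpos (div_pos hr hR).le ((div_le_one hR).2 hrR)]

theorem logHardyWeight_nonneg (hs : n ≤ s) (hγ : 1 ≤ γ) (hr : 0 < r) (hrR : r ≤ R) :
    0 ≤ logHardyWeight n s γ R r := by
  have hR : 0 < R := hr.trans_le hrR
  have hlog := one_le_one_sub_log_div hr hrR
  exact add_nonneg (div_nonneg (sub_nonneg.2 hs) (by positivity))
    (mul_nonneg (div_nonneg (sub_nonneg.2 hγ) (by positivity)) (by positivity))

theorem continuousAt_inv_one_sub_log_div_rpow (hr : 0 < r) (hrR : r ≤ R) :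
    ContinuousAt (fun p : ℝ × ℝ ↦ ((1 - Real.log (p.2 / p.1))⁻¹) ^ γ) (R, r) := by
  have hR : 0 < R := hr.trans_le hrR
  have hlog : 1 - Real.log (r / R) ≠ 0 :=
    (zero_lt_one.trans_le (one_le_one_sub_log_div hr hrR)).ne'
  have hlog_cont : ContinuousAt (fun p : ℝ × ℝ ↦ 1 - Real.log (p.2 / p.1)) (R, r) :=
    ((continuousAt_snd.div continuousAt_fst hR.ne').log (div_pos hr hR).ne').const_sub 1
  exact (hlog_cont.inv₀ hlog).rpow_const (.inl (inv_ne_zero hlog))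

theorem continuousAt_logHardyWeight (hr : 0 < r) (hrR : r ≤ R) :
    ContinuousAt (fun p : ℝ × ℝ ↦ logHardyWeight n s γ p.1 p.2) (R, r) := by
  have hR : 0 < R := hr.trans_le hrR
  have hpow (p : ℝ) : ContinuousAt (fun q : ℝ × ℝ ↦ q.2 ^ p) (R, r) :=
    continuousAt_snd.rpow_const (.inl hr.ne')
  have hRpow : ContinuousAt (fun q : ℝ × ℝ ↦ q.1 ^ (s - n)) (R, r) :=
    continuousAt_fst.rpow_const (.inl hR.ne')
  exact (continuousAt_const.div (hpow s) (by positivity)).add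
    ((continuousAt_const.div hRpow (by positivity)).mul
      ((continuousAt_inv_one_sub_log_div_rpow hr hrR).div (hpow n) (by positivity)))

theorem continuousAt_logHardyWeight_right (hr : 0 < r) (hrR : r ≤ R) :
    ContinuousAt (logHardyWeight n s γ R) r :=
  (continuousAt_logHardyWeight hr hrR).comp (f := fun r ↦ (R, r)) (by fun_prop)

theorem continuousAt_logHardyWeight_left (hr : 0 < r) (hrR : r ≤ R) :
    ContinuousAt (fun R ↦ logHardyWeight n s γ R r) R :=
  (continuousAt_logHardyWeight hr hrR).comp (f := fun R ↦ (R, r)) (by fun_prop)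

theorem lowerSemicontinuous_indicator_logHardyWeight : LowerSemicontinuous
    ((Ioo 0 R).indicator fun r ↦ ENNReal.ofReal (logHardyWeight n s γ R r)) := by
  intro r
  by_cases hr : r ∈ Ioo 0 R
  · refine ContinuousAt.lowerSemicontinuousAt ?_
    have hcont : ContinuousAt (fun r ↦ ENNReal.ofReal (logHardyWeight n s γ R r)) r :=
      ENNReal.continuous_ofReal.continuousAt.comp
        (continuousAt_logHardyWeight_right hr.1 hr.2.le)
    refine hcont.congr ?_
    filter_upwards [isOpen_Ioo.mem_nhds hr] with t ht
    exact (indicator_of_mem ht fun r ↦ ENNReal.ofReal (logHardyWeight n s γ R r)).symm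
  · intro a ha
    rw [indicator_of_notMem hr] at ha
    exact (not_lt_bot ha).elim

theorem hasDerivAt_logHardyTail (hr : 0 < r) (hrR : r ≤ R) :
    HasDerivAt (logHardyTail n s γ R) (-(r ^ (n - 1) * logHardyWeight n s γ R r)) r := by
  have hR : 0 < R := hr.trans_le hrR
  have hlog : 0 < 1 - Real.log (r / R) := zero_lt_one.trans_le (one_le_one_sub_log_div hr hrR)
  have hpow : HasDerivAt (fun r : ℝ ↦ r ^ (n - s)) ((n - s) * r ^ (n - s - 1)) r :=
    Real.hasDerivAt_rpow_const (.inl hr.ne')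
  have hlog_deriv : HasDerivAt (fun r : ℝ ↦ 1 - Real.log (r / R)) (-r⁻¹) r := by
    refine (((hasDerivAt_id r).div_const R).log (div_pos hr hR).ne').const_sub 1 |>.congr_deriv ?_
    simp only [id]
    field_simp
  have hX := (hlog_deriv.rpow_const (p := 1 - γ) (.inl hlog.ne')).const_mul (R ^ (n - s))
  refine (hpow.sub hX).congr_deriv ?_
  have hrs : r ^ (n - 1) / r ^ s = r ^ (n - s - 1) := by rw [← Real.rpow_sub hr]; ring_nf
  have hrn : r ^ (n - 1) / r ^ n = r⁻¹ := by
    rw [← Real.rpow_sub hr, sub_sub_cancel_left, Real.rpow_neg_one]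
  have hRs : (R ^ (s - n))⁻¹ = R ^ (n - s) := by rw [← Real.rpow_neg hR.le, neg_sub]
  have hXγ : ((1 - Real.log (r / R))⁻¹) ^ γ = (1 - Real.log (r / R)) ^ (1 - γ - 1) := by
    rw [Real.inv_rpow hlog.le, ← Real.rpow_neg hlog.le, sub_sub_cancel_left]
  calc _ = -((s - n) * r ^ (n - s - 1) +
        (γ - 1) * R ^ (n - s) * (1 - Real.log (r / R)) ^ (1 - γ - 1) * r⁻¹) := by ring
    _ = _ := by rw [← hrs, ← hrn, ← hRs, ← hXγ, logHardyWeight]; ring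

theorem logHardyTail_self (hR : 0 < R) : logHardyTail n s γ R R = 0 := by
  simp [logHardyTail, hR.ne']

theorem logHardyTail_le {ρ : ℝ} (hρ : 0 < ρ) (hρR : ρ ≤ R) :
    logHardyTail n s γ R ρ ≤ ρ ^ (n - s) := by
  have hR : 0 < R := hρ.trans_le hρR
  have hlog := one_le_one_sub_log_div hρ hρR
  exact sub_le_self _ (by positivity)

theorem setLIntegral_Ioc_rpow_mul_logHardyWeight (hs : n ≤ s) (hγ : 1 ≤ γ) {ρ : ℝ} (hρ : 0 < ρ)
    (hρR : ρ ≤ R) :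
    ∫⁻ r in Ioc ρ R, ENNReal.ofReal (r ^ (n - 1) * logHardyWeight n s γ R r) =
      ENNReal.ofReal (logHardyTail n s γ R ρ) := by
  have hmem {r : ℝ} (hr : r ∈ uIcc ρ R) : 0 < r ∧ r ≤ R := by
    rw [uIcc_of_le hρR] at hr
    exact ⟨hρ.trans_le hr.1, hr.2⟩
  have hint : IntervalIntegrable (fun r ↦ r ^ (n - 1) * logHardyWeight n s γ R r) volume ρ R :=
    ContinuousOn.intervalIntegrable fun r hr ↦
      ((Real.continuousAt_rpow_const r _ (.inl (hmem hr).1.ne')).mul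
        (continuousAt_logHardyWeight_right (hmem hr).1 (hmem hr).2)).continuousWithinAt
  have hftc : ∫ r in ρ..R, r ^ (n - 1) * logHardyWeight n s γ R r = logHardyTail n s γ R ρ := by
    rw [intervalIntegral.integral_eq_sub_of_hasDerivAt (f := -logHardyTail n s γ R)
      (fun r hr ↦ by simpa using (hasDerivAt_logHardyTail (hmem hr).1 (hmem hr).2).neg) hint]
    simp [logHardyTail_self (hρ.trans_le hρR)]
  rw [← hftc, intervalIntegral.integral_of_le hρR, ofReal_integral_eq_lintegral_ofReal hint.1]
  filter_upwards [ae_restrict_mem measurableSet_Ioc] with r hr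
  have hr0 : 0 < r := hρ.trans hr.1
  exact mul_nonneg (by positivity) (logHardyWeight_nonneg hs hγ hr0 hr.2)

theorem isHardyPair_logHardyWeight {N : ℕ} (hN : 1 ≤ N) (hs : (N : ℝ) ≤ s) (hγ : 1 ≤ γ) :
    IsHardyPair N ((Ioo 0 R).indicator fun r ↦ ENNReal.ofReal (logHardyWeight N s γ R r))
      fun ρ ↦ (ENNReal.ofReal ρ ^ (s - 1))⁻¹ := by
  intro ρ hρ
  have hpow {r : ℝ} : r ^ (N - 1) = r ^ ((N : ℝ) - 1) := by
    rw [← Real.rpow_natCast, Nat.cast_sub hN, Nat.cast_one]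
  have hinter : Ioo 0 R ∩ Ioi ρ = Ioo ρ R := by
    rw [inter_comm, Ioi_inter_Ioo, max_eq_left hρ.le]
  simp only [← indicator_mul_right _ fun r : ℝ ↦ ENNReal.ofReal (r ^ (N - 1))]
  rw [setLIntegral_indicator measurableSet_Ioo, hinter]
  rcases lt_or_ge R ρ with hRρ | hρR
  · simp [Ioo_eq_empty hRρ.le.not_gt]
  calc ∫⁻ r in Ioo ρ R, ENNReal.ofReal (r ^ (N - 1)) * ENNReal.ofReal (logHardyWeight N s γ R r)
      = ∫⁻ r in Ioc ρ R, ENNReal.ofReal (r ^ ((N : ℝ) - 1) * logHardyWeight N s γ R r) := by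
        rw [restrict_Ioo_eq_restrict_Ioc]
        refine setLIntegral_congr_fun measurableSet_Ioc fun r hr ↦ ?_
        rw [hpow, ENNReal.ofReal_mul (Real.rpow_nonneg (hρ.trans hr.1).le _)]
    _ = ENNReal.ofReal (logHardyTail N s γ R ρ) :=
        setLIntegral_Ioc_rpow_mul_logHardyWeight hs hγ hρ hρR
    _ ≤ ENNReal.ofReal (ρ ^ (N - s)) := ENNReal.ofReal_le_ofReal (logHardyTail_le hρ hρR)
    _ = ENNReal.ofReal (ρ ^ (N - 1)) * (ENNReal.ofReal ρ ^ (s - 1))⁻¹ := by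
        rw [hpow, ENNReal.ofReal_rpow_of_pos hρ, ← div_eq_mul_inv,
          ← ENNReal.ofReal_div_of_pos (by positivity), ← Real.rpow_sub hρ, sub_sub_sub_cancel_right]

theorem antitone_inv_ofReal_rpow {p : ℝ} (hp : 0 ≤ p) :
    Antitone fun r ↦ (ENNReal.ofReal r ^ p)⁻¹ :=
  fun _ _ hab ↦ ENNReal.inv_le_inv.2 (ENNReal.rpow_le_rpow (ENNReal.ofReal_le_ofReal hab) hp)

end Weight

section DistanceWeight

theorem ofReal_setIntegral_norm_mul {X G : Type*} [MeasurableSpace X] [NormedAddCommGroup G]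
    {μ : Measure X} {Ω : Set X} (hΩ : MeasurableSet Ω) {φ : X → G} {g : X → ℝ}
    (hint : IntegrableOn (fun x ↦ ‖φ x‖ * g x) Ω μ) (hg : ∀ x ∈ Ω, 0 ≤ g x) :
    ENNReal.ofReal (∫ x in Ω, ‖φ x‖ * g x ∂μ) = ∫⁻ x in Ω, ‖φ x‖ₑ * ENNReal.ofReal (g x) ∂μ := by
  rw [ofReal_integral_eq_lintegral_ofReal hint
    (ae_restrict_of_forall_mem hΩ fun x hx ↦ mul_nonneg (norm_nonneg _) (hg x hx))]
  simp only [ENNReal.ofReal_mul (norm_nonneg _), ofReal_norm]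

variable {X G : Type*} [PseudoMetricSpace X] {Ω : Set X}

theorem infDist_compl_pos (hΩo : IsOpen Ω) (hΩ : Ω ≠ univ) {x : X} (hx : x ∈ Ω) :
    0 < infDist x Ωᶜ :=
  (hΩo.isClosed_compl.notMem_iff_infDist_pos (nonempty_compl.2 hΩ)).1 (notMem_compl_iff.2 hx)

variable [MeasurableSpace X] [OpensMeasurableSpace X] [NormedAddCommGroup G] {μ : Measure X}
  [IsFiniteMeasureOnCompacts μ] {R : ℝ} {φ : X → G}

theorem integrable_norm_mul_comp_infDist_compl (hΩo : IsOpen Ω) (hΩ : Ω ≠ univ)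
    (hR : ∀ x ∈ Ω, infDist x Ωᶜ ≤ R) (hφ : Continuous φ) (hc : HasCompactSupport φ)
    (hsupp : tsupport φ ⊆ Ω) {k : ℝ → ℝ} (hk : ∀ r ∈ Ioc 0 R, ContinuousAt k r) :
    Integrable (fun x ↦ ‖φ x‖ * k (infDist x Ωᶜ)) μ := by
  have hcont : ContinuousOn (fun x ↦ k (infDist x Ωᶜ)) (tsupport φ) := fun x hx ↦
    ((hk _ ⟨infDist_compl_pos hΩo hΩ (hsupp hx), hR x (hsupp hx)⟩).comp (f := (infDist · Ωᶜ))
      (continuous_infDist_pt Ωᶜ).continuousAt).continuousWithinAt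
  have hint : IntegrableOn (fun x ↦ ‖φ x‖ * k (infDist x Ωᶜ)) (tsupport φ) μ :=
    (hφ.norm.continuousOn.mul hcont).integrableOn_compact' hc (isClosed_tsupport φ).measurableSet
  refine hint.integrable_of_forall_notMem_eq_zero fun x hx ↦ ?_
  rw [image_eq_zero_of_notMem_tsupport hx, norm_zero, zero_mul]

theorem setIntegral_norm_mul_logHardyWeight (n s γ : ℝ) (hΩo : IsOpen Ω) (hΩ : Ω ≠ univ)
    (hR : ∀ x ∈ Ω, infDist x Ωᶜ ≤ R) (hφ : Continuous φ) (hc : HasCompactSupport φ)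
    (hsupp : tsupport φ ⊆ Ω) :
    ∫ x in Ω, ‖φ x‖ * logHardyWeight n s γ R (infDist x Ωᶜ) ∂μ =
      (s - n) * ∫ x in Ω, ‖φ x‖ / infDist x Ωᶜ ^ s ∂μ +
        (γ - 1) / R ^ (s - n) * ∫ x in Ω, ‖φ x‖ / infDist x Ωᶜ ^ n *
          ((1 - Real.log (infDist x Ωᶜ / R))⁻¹) ^ γ ∂μ := by
  have hpow_int : Integrable (fun x ↦ ‖φ x‖ * (infDist x Ωᶜ ^ s)⁻¹) μ :=
    integrable_norm_mul_comp_infDist_compl (k := fun r ↦ (r ^ s)⁻¹) hΩo hΩ hR hφ hc hsupp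
      fun r hr ↦ (Real.continuousAt_rpow_const r _ (.inl hr.1.ne')).inv₀
        (Real.rpow_pos_of_pos hr.1 _).ne'
  have hlog_int : Integrable (fun x ↦ ‖φ x‖ * ((infDist x Ωᶜ ^ n)⁻¹ *
      ((1 - Real.log (infDist x Ωᶜ / R))⁻¹) ^ γ)) μ :=
    integrable_norm_mul_comp_infDist_compl
      (k := fun r ↦ (r ^ n)⁻¹ * ((1 - Real.log (r / R))⁻¹) ^ γ) hΩo hΩ hR hφ hc hsupp
      fun r hr ↦ ((Real.continuousAt_rpow_const r _ (.inl hr.1.ne')).inv₀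
        (Real.rpow_pos_of_pos hr.1 _).ne').mul
        ((continuousAt_inv_one_sub_log_div_rpow hr.1 hr.2).comp (f := fun r ↦ (R, r))
          (by fun_prop))
  simp only [div_eq_mul_inv (‖φ _‖), mul_assoc ‖φ _‖]
  rw [← integral_const_mul, ← integral_const_mul,
    ← integral_add (hpow_int.integrableOn.const_mul _) (hlog_int.integrableOn.const_mul _)]
  refine integral_congr_ae (.of_forall fun x ↦ ?_)
  simp only [logHardyWeight]
  ring

end DistanceWeight

section LogHardy

variable {E F : Type*} [NormedAddCommGroup E] [NormedSpace ℝ E] [FiniteDimensional ℝ E]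
  [Nontrivial E] [MeasurableSpace E] [BorelSpace E] {μ : Measure E} [μ.IsAddHaarMeasure]
  [NormedAddCommGroup F] [NormedSpace ℝ F] {Ω : Set E} {R s γ : ℝ} {u : E → F}

theorem setLIntegral_enorm_mul_logHardyWeight_le (hΩo : IsOpen Ω) (hΩ : Ω ≠ univ)
    (hR : ∀ x ∈ Ω, infDist x Ωᶜ ≤ R) (hs : (finrank ℝ E : ℝ) ≤ s) (hγ : 1 ≤ γ)
    (hu : ContDiff ℝ 1 u) (hsupp : tsupport u ⊆ Ω) :
    ∫⁻ x in Ω, ‖u x‖ₑ * ENNReal.ofReal (logHardyWeight (finrank ℝ E) s γ R (infDist x Ωᶜ)) ∂μ ≤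
      ∫⁻ x in Ω, ‖fderiv ℝ u x‖ₑ * (ENNReal.ofReal (infDist x Ωᶜ) ^ (s - 1))⁻¹ ∂μ := by
  have hdim : 1 ≤ finrank ℝ E := finrank_pos
  have hs1 : 0 ≤ s - 1 := sub_nonneg.2 ((Nat.one_le_cast.2 hdim).trans hs)
  have hmemΩ {x : E} (hx : u x ≠ 0) : x ∈ Ω := hsupp (subset_tsupport u hx)
  have hsupp' : (Function.support fun x ↦
      ‖fderiv ℝ u x‖ₑ * (ENNReal.ofReal (infDist x Ωᶜ) ^ (s - 1))⁻¹) ⊆ Ω :=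
    Function.support_subset_iff'.2 fun x hx ↦ by
      rw [← ofReal_norm, fderiv_of_notMem_tsupport ℝ fun h ↦ hx (hsupp h), norm_zero,
        ENNReal.ofReal_zero, zero_mul]
  obtain ⟨R', -, hR', hR'_tendsto⟩ := exists_seq_strictAnti_tendsto R
  rw [← lintegral_indicator hΩo.measurableSet (fun x ↦ ‖fderiv ℝ u x‖ₑ * _),
    indicator_eq_self.2 hsupp']
  refine (setLIntegral_le_lintegral Ω _).trans (lintegral_le_of_le_liminf
    (F := fun k x ↦ ‖u x‖ₑ * (Ioo 0 (R' k)).indicator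
      (fun r ↦ ENNReal.ofReal (logHardyWeight (finrank ℝ E) s γ (R' k) r)) (infDist x Ωᶜ))
    (fun k ↦ ?_) (fun x ↦ ?_) fun k ↦ ?_)
  · exact hu.continuous.enorm.measurable.mul
      (lowerSemicontinuous_indicator_logHardyWeight.measurable.comp measurable_infDist)
  · by_cases hx : u x = 0
    · simp [hx]
    have hd := infDist_compl_pos hΩo hΩ (hmemΩ hx)
    have hdR := hR x (hmemΩ hx)
    have hweight := (continuousAt_logHardyWeight_left (n := finrank ℝ E) (s := s) (γ := γ) hd
      hdR).tendsto.comp hR'_tendsto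
    refine (Tendsto.liminf_eq (ENNReal.Tendsto.const_mul ?_ (.inr enorm_ne_top))).ge
    simp only [indicator_of_mem (mem_Ioo.2 ⟨hd, hdR.trans_lt (hR' _)⟩)]
    exact ENNReal.tendsto_ofReal hweight
  · have hwv := isHardyPair_logHardyWeight (R := R' k) hdim hs hγ
    exact lintegral_mul_infDist_le hwv lowerSemicontinuous_indicator_logHardyWeight
      (antitone_inv_ofReal_rpow hs1) hu (nonempty_compl.2 hΩ)
      fun x hx ↦ by_contra fun hux ↦ hx (hmemΩ hux)

theorem setIntegral_norm_mul_logHardyWeight_le (hΩo : IsOpen Ω) (hΩ : Ω ≠ univ)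
    (hR : ∀ x ∈ Ω, infDist x Ωᶜ ≤ R) (hs : (finrank ℝ E : ℝ) ≤ s) (hγ : 1 ≤ γ)
    (hu : ContDiff ℝ 1 u) (hc : HasCompactSupport u) (hsupp : tsupport u ⊆ Ω) :
    ∫ x in Ω, ‖u x‖ * logHardyWeight (finrank ℝ E) s γ R (infDist x Ωᶜ) ∂μ ≤
      ∫ x in Ω, ‖fderiv ℝ u x‖ / infDist x Ωᶜ ^ (s - 1) ∂μ := by
  have hd {x : E} (hx : x ∈ Ω) : 0 < infDist x Ωᶜ := infDist_compl_pos hΩo hΩ hx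
  have hu_int : Integrable
      (fun x ↦ ‖u x‖ * logHardyWeight (finrank ℝ E) s γ R (infDist x Ωᶜ)) μ :=
    integrable_norm_mul_comp_infDist_compl hΩo hΩ hR hu.continuous hc hsupp
      fun r hr ↦ continuousAt_logHardyWeight_right hr.1 hr.2
  have hDu_int : Integrable (fun x ↦ ‖fderiv ℝ u x‖ * (infDist x Ωᶜ ^ (s - 1))⁻¹) μ :=
    integrable_norm_mul_comp_infDist_compl (k := fun r ↦ (r ^ (s - 1))⁻¹) hΩo hΩ hR
      (hu.continuous_fderiv one_ne_zero) (hc.fderiv ℝ) ((tsupport_fderiv_subset ℝ).trans hsupp)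
      fun r hr ↦ (Real.continuousAt_rpow_const r _ (.inl hr.1.ne')).inv₀
        (Real.rpow_pos_of_pos hr.1 _).ne'
  have hDu_nonneg (x : E) : 0 ≤ (infDist x Ωᶜ ^ (s - 1))⁻¹ :=
    inv_nonneg.2 (Real.rpow_nonneg infDist_nonneg _)
  simp only [div_eq_mul_inv]
  rw [← ENNReal.ofReal_le_ofReal_iff
      (integral_nonneg fun x ↦ mul_nonneg (norm_nonneg _) (hDu_nonneg x)),
    ofReal_setIntegral_norm_mul hΩo.measurableSet hu_int.integrableOn
      fun x hx ↦ logHardyWeight_nonneg hs hγ (hd hx) (hR x hx),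
    ofReal_setIntegral_norm_mul hΩo.measurableSet hDu_int.integrableOn fun x _ ↦ hDu_nonneg x]
  refine (setLIntegral_enorm_mul_logHardyWeight_le hΩo hΩ hR hs hγ hu hsupp).trans_eq
    (setLIntegral_congr_fun hΩo.measurableSet fun x hx ↦ ?_)
  simp only [ENNReal.ofReal_inv_of_pos (Real.rpow_pos_of_pos (hd hx) _),
    ENNReal.ofReal_rpow_of_pos (hd hx)]

theorem l1_weighted_hardy_log_remainder_general (hΩo : IsOpen Ω) (hΩ : Ω ≠ univ)
    (hR : ∀ x ∈ Ω, infDist x Ωᶜ ≤ R) (hs : (finrank ℝ E : ℝ) ≤ s) (hγ : 1 ≤ γ)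
    (hu : ContDiff ℝ 1 u) (hc : HasCompactSupport u) (hsupp : tsupport u ⊆ Ω) :
    (s - finrank ℝ E) * ∫ x in Ω, ‖u x‖ / infDist x Ωᶜ ^ s ∂μ +
        (γ - 1) / R ^ (s - finrank ℝ E) * ∫ x in Ω, ‖u x‖ / infDist x Ωᶜ ^ (finrank ℝ E : ℝ) *
          ((1 - Real.log (infDist x Ωᶜ / R))⁻¹) ^ γ ∂μ ≤
      ∫ x in Ω, ‖fderiv ℝ u x‖ / infDist x Ωᶜ ^ (s - 1) ∂μ := by
  rw [← setIntegral_norm_mul_logHardyWeight _ _ _ hΩo hΩ hR hu.continuous hc hsupp]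
  exact setIntegral_norm_mul_logHardyWeight_le hΩo hΩ hR hs hγ hu hc hsupp

end LogHardy

/-- `L^1` weighted Hardy inequality with logarithmic remainder
on a general open set of finite inner radius. -/
theorem l1_weighted_hardy_log_remainder (n : ℕ) (hn : 1 ≤ n)
    (Ω : Set (EuclideanSpace ℝ (Fin n))) (hΩo : IsOpen Ω) (hΩne : Ω.Nonempty)
    (hΩuniv : Ω ≠ Set.univ)
    (R : ℝ) (hR : IsLUB ((fun x => Metric.infDist x Ωᶜ) '' Ω) R) :
    ∀ s : ℝ, (n : ℝ) ≤ s → ∀ γ : ℝ, 1 < γ →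
    ∀ u : EuclideanSpace ℝ (Fin n) → ℝ, ContDiff ℝ (⊤ : ℕ∞) u →
      HasCompactSupport u → tsupport u ⊆ Ω →
      (∫ x in Ω, ‖fderiv ℝ u x‖ / (Metric.infDist x Ωᶜ) ^ (s - 1)) ≥
        (s - n) * (∫ x in Ω, |u x| / (Metric.infDist x Ωᶜ) ^ s)
        + ((γ - 1) / R ^ (s - n)) *
            ∫ x in Ω, (|u x| / (Metric.infDist x Ωᶜ) ^ (n : ℝ)) *
              ((1 - Real.log (Metric.infDist x Ωᶜ / R))⁻¹) ^ γ := by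
  intro s hs γ hγ u hu hc hsupp
  have : Nonempty (Fin n) := ⟨⟨0, hn⟩⟩
  simpa using l1_weighted_hardy_log_remainder_general (μ := volume) hΩo hΩuniv
    (fun x hx ↦ hR.1 (mem_image_of_mem _ hx)) (by simpa using hs) hγ.le
    (hu.of_le (by exact_mod_cast le_top)) hc hsupp
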